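/- arXiv:hep-th/0304246 — 2 statements merged into one kernel-verified Lean document; each statement's English description precedes it below -/
import Mathlib

section
/- Triangular decomposition: for any generalized Cartan matrix A of size k, the Kac–Moody algebra g(A) over ℚ decomposes as an internal direct sum of ℚ-subspaces g(A) = N₋ ⊕ H ⊕ N₊, where N₊ is the Lie subalgebra generated by e_1,…,e_k, N₋ is the Lie subalgebra generated by f_1,…,f_k, and H is the linear span of h_1,…,h_k; moreover h_1,…,h_k are linearly independent, so dim H = k. -/
noncomputable section

open CartanMatrix

/-- A generalized Cartan matrix: `A i i = 2`, off-diagonal entries are non-positive, and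
`A i j = 0 ↔ A j i = 0`. -/
def IsGCM {B : Type*} (A : Matrix B B ℤ) : Prop :=
  (∀ i, A i i = 2) ∧ (∀ i j, i ≠ j → A i j ≤ 0) ∧ (∀ i j, A i j = 0 ↔ A j i = 0)

/-- The images in the Kac–Moody algebra `Matrix.ToLieAlgebra ℚ A` of the generators of the
free Lie algebra. -/
def KMgen {B : Type*} [DecidableEq B] (A : Matrix B B ℤ) (x : Generators B) :
    Matrix.ToLieAlgebra ℚ A :=
  LieSubmodule.Quotient.mk (N := Relations.toIdeal ℚ A) (FreeLieAlgebra.of ℚ x)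

/-- The Cartan generator `h i`. -/
def gH {B : Type*} [DecidableEq B] (A : Matrix B B ℤ) (i : B) : Matrix.ToLieAlgebra ℚ A :=
  KMgen A (Generators.H i)

/-- The raising generator `e i`. -/
def gE {B : Type*} [DecidableEq B] (A : Matrix B B ℤ) (i : B) : Matrix.ToLieAlgebra ℚ A :=
  KMgen A (Generators.E i)

/-- The lowering generator `f i`. -/
def gF {B : Type*} [DecidableEq B] (A : Matrix B B ℤ) (i : B) : Matrix.ToLieAlgebra ℚ A :=
  KMgen A (Generators.F i)

/-!
By the Chevalley relations, bracketing with a generator preserves `N₋ + H + N₊`, so this sum is all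
of `g(A)`. It is direct because the automorphism `e i ↦ 2 • e i`, `f i ↦ 2⁻¹ • f i`, `h i ↦ h i`
has its eigenvalues in `(0, 1)` on `N₋`, equal to `1` on `H`, and in `(1, ∞)` on `N₊`.

The `h i` are independent because every weight `l` is the highest weight of a `g(A)`-module. Let the
free associative algebra on the `f i` act on itself by left multiplication and let the `h i` and
`e i` act as they must for the vacuum to be a highest-weight vector of weight `l`; this gives the
Chevalley relations. The Serre elements in the `e i` commute with all `f j` and kill the vacuum, so
they act by zero. The Serre elements in the `f i` commute with all `e j`, so their images lie in
the largest submodule avoiding the vacuum, and they act by zero on the quotient.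
-/

section ChevalleySystem

open LieAlgebra

/-- Elements `e i`, `f i`, `h i` of a Lie ring satisfying the Chevalley relations of the integer
matrix `A`; the Serre relations are not included. -/
structure IsChevalleySystem {B L : Type*} [LieRing L] (A : Matrix B B ℤ) (e f h : B → L) :
    Prop where
  lie_h_h : ∀ i j, ⁅h i, h j⁆ = 0
  lie_e_f_same : ∀ i, ⁅e i, f i⁆ = h i
  lie_e_f_ne : ∀ i j, i ≠ j → ⁅e i, f j⁆ = 0
  lie_h_e : ∀ i j, ⁅h i, e j⁆ = A i j • e j
  lie_h_f : ∀ i j, ⁅h i, f j⁆ = -(A i j • f j)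

/-- The element `ad (x i) ^ (1 - A i j) (x j)`, whose vanishing for `i ≠ j` is the Serre relation.
It is written as in `CartanMatrix.Relations.adE`, so as not to subtract in `ℕ`; consequently it is
always zero for `i = j`. -/
def serreElement (R : Type*) {B L : Type*} [CommRing R] [LieRing L] [LieAlgebra R L]
    (A : Matrix B B ℤ) (x : B → L) (i j : B) : L :=
  (ad R L (x i) ^ (-A i j).toNat) ⁅x i, x j⁆

variable {R L L' B : Type*} [CommRing R] [LieRing L] [LieAlgebra R L] [LieRing L'] [LieAlgebra R L']
  {A : Matrix B B ℤ} {e f h x : B → L}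

lemma lie_ad_pow_of_lie_eq_zero {x y : L} (hxy : ⁅x, y⁆ = 0) (n : ℕ) (z : L) :
    ⁅x, (ad R L y ^ n) z⁆ = (ad R L y ^ n) ⁅x, z⁆ := by
  induction n with
  | zero => rfl
  | succ n ih => rw [pow_succ', Module.End.mul_apply, Module.End.mul_apply, ad_apply, ad_apply,
      leibniz_lie, hxy, zero_lie, zero_add, ih]

lemma serreElement_self (i : B) : serreElement R A x i i = 0 := by
  rw [serreElement, lie_self, map_zero]

lemma serreElement_induction {p : L → Prop} {i j : B} (base : p ⁅x i, x j⁆)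
    (lie : ∀ y, p y → p ⁅x i, y⁆) : p (serreElement R A x i j) := by
  rw [serreElement]
  induction (-A i j).toNat with
  | zero => exact base
  | succ n ih => rw [pow_succ']; exact lie _ ih

lemma map_serreElement (φ : L →ₗ⁅R⁆ L') (i j : B) :
    φ (serreElement R A x i j) = serreElement R A (φ ∘ x) i j := by
  simp only [serreElement]
  induction (-A i j).toNat with
  | zero => exact φ.map_lie _ _
  | succ n ih => simp only [pow_succ', Module.End.mul_apply, ad_apply, LieHom.map_lie, ih,
      Function.comp_apply]

lemma serreElement_smul (c : R) (i j : B) :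
    serreElement R A (c • x) i j = c ^ ((-A i j).toNat + 2) • serreElement R A x i j := by
  simp only [serreElement, Pi.smul_apply, map_smul, smul_pow, LinearMap.smul_apply, smul_lie,
    lie_smul, smul_smul]
  ring_nf

namespace IsChevalleySystem

lemma symm (hs : IsChevalleySystem A e f h) : IsChevalleySystem A f e (-h) where
  lie_h_h i j := by simp [hs.lie_h_h]
  lie_e_f_same i := by rw [← lie_skew, hs.lie_e_f_same, Pi.neg_apply]
  lie_e_f_ne i j hij := by rw [← lie_skew, hs.lie_e_f_ne j i hij.symm, neg_zero]
  lie_h_e i j := by simp [hs.lie_h_f]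
  lie_h_f i j := by simp [hs.lie_h_e]

lemma smul_inv_smul (hs : IsChevalleySystem A e f h) (c : Rˣ) :
    IsChevalleySystem A ((c : R) • e) ((↑c⁻¹ : R) • f) h where
  lie_h_h := hs.lie_h_h
  lie_e_f_same i := by simp [hs.lie_e_f_same, smul_smul]
  lie_e_f_ne i j hij := by simp [hs.lie_e_f_ne i j hij]
  lie_h_e i j := by rw [Pi.smul_apply, lie_smul, hs.lie_h_e, smul_comm]
  lie_h_f i j := by rw [Pi.smul_apply, lie_smul, hs.lie_h_f, smul_neg, smul_comm]

lemma map (hs : IsChevalleySystem A e f h) (φ : L →ₗ⁅R⁆ L') :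
    IsChevalleySystem A (φ ∘ e) (φ ∘ f) (φ ∘ h) where
  lie_h_h i j := by simp [← LieHom.map_lie, hs.lie_h_h]
  lie_e_f_same i := by simp [← LieHom.map_lie, hs.lie_e_f_same]
  lie_e_f_ne i j hij := by simp [← LieHom.map_lie, hs.lie_e_f_ne i j hij]
  lie_h_e i j := by simp [← LieHom.map_lie, hs.lie_h_e]
  lie_h_f i j := by simp [← LieHom.map_lie, hs.lie_h_f]

lemma of_map {φ : L →ₗ⁅R⁆ L'} (hφ : Function.Injective φ)
    (hs : IsChevalleySystem A (φ ∘ e) (φ ∘ f) (φ ∘ h)) : IsChevalleySystem A e f h where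
  lie_h_h i j := hφ (by simpa using hs.lie_h_h i j)
  lie_e_f_same i := hφ (by simpa using hs.lie_e_f_same i)
  lie_e_f_ne i j hij := hφ (by simpa using hs.lie_e_f_ne i j hij)
  lie_h_e i j := hφ (by simpa using hs.lie_h_e i j)
  lie_h_f i j := hφ (by simpa using hs.lie_h_f i j)

lemma lie_h_f_smul (hs : IsChevalleySystem A e f h) (i j : B) :
    ⁅h i, f j⁆ = ((-A i j : ℤ) : R) • f j := by
  rw [hs.lie_h_f, Int.cast_smul_eq_zsmul, neg_smul]

variable (R) in
lemma lie_e_serreElement_f_same (hs : IsChevalleySystem A e f h) (hA : IsGCM A) {i j : B}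
    (hij : i ≠ j) : ⁅e i, serreElement R A f i j⁆ = 0 := by
  have hef : ⁅e i, f j⁆ = 0 := hs.lie_e_f_ne i j hij
  have pow_succ_apply : serreElement R A f i j = (ad R L (f i) ^ ((-A i j).toNat + 1)) (f j) := by
    rw [pow_succ]; rfl
  rw [pow_succ_apply]
  rcases eq_or_ne (h i) 0 with hi | hi
  · rw [lie_ad_pow_of_lie_eq_zero (hi ▸ hs.lie_e_f_same i), hef, map_zero]
  rcases eq_or_ne (f j) 0 with hj | hj
  · rw [hj, map_zero, lie_zero]
  have triple : IsSl2Triple (h i) (e i) (f i) :=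
    { h_ne_zero := hi
      lie_e_f := hs.lie_e_f_same i
      lie_h_e_nsmul := by rw [hs.lie_h_e, hA.1, ofNat_zsmul]
      lie_h_f_nsmul := by rw [hs.lie_h_f, hA.1, ofNat_zsmul] }
  have primitive : triple.HasPrimitiveVectorWith (f j) ((-A i j : ℤ) : R) :=
    ⟨hj, hs.lie_h_f_smul i j, hef⟩
  have weight : ((-A i j : ℤ) : R) = ((-A i j).toNat : R) := by
    conv_lhs => rw [← Int.toNat_of_nonneg (neg_nonneg.2 (hA.2.1 i j hij)), Int.cast_natCast]
  have key := primitive.lie_e_pow_succ_toEnd_f (-A i j).toNat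
  rwa [weight, sub_self, mul_zero, zero_smul] at key

variable (R) in
lemma lie_e_serreElement_f (hs : IsChevalleySystem A e f h) (hA : IsGCM A) (k i j : B) :
    ⁅e k, serreElement R A f i j⁆ = 0 := by
  rcases eq_or_ne i j with rfl | hij
  · rw [serreElement_self, lie_zero]
  rcases eq_or_ne k i with rfl | hki
  · exact hs.lie_e_serreElement_f_same R hA hij
  have hki' : ⁅e k, f i⁆ = 0 := hs.lie_e_f_ne k i hki
  rw [serreElement, lie_ad_pow_of_lie_eq_zero hki', leibniz_lie, hki', zero_lie, zero_add]
  rcases eq_or_ne k j with rfl | hkj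
  · rw [hs.lie_e_f_same, ← lie_skew, hs.lie_h_f, neg_neg]
    rcases eq_or_ne (A i k) 0 with hik | hik
    · rw [(hA.2.2 i k).1 hik, zero_smul, map_zero]
    · have pos : (-A i k).toNat ≠ 0 := by have := hA.2.1 i k hij; omega
      rw [← Nat.succ_pred_eq_of_ne_zero pos, pow_succ, Module.End.mul_apply, ad_apply, lie_zsmul,
        lie_self, smul_zero, map_zero]
  · rw [hs.lie_e_f_ne k j hkj, lie_zero, map_zero]

end IsChevalleySystem

end ChevalleySystem

section LieSpan

variable {R L : Type*} [CommRing R] [LieRing L] [LieAlgebra R L] {s : Set L}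

lemma toSubmodule_lieSpan_le {V : Submodule R L} (hsV : s ⊆ V)
    (hV : ∀ x ∈ s, ∀ v ∈ V, ⁅x, v⁆ ∈ V) : (LieSubalgebra.lieSpan R L s).toSubmodule ≤ V := by
  suffices ∀ x ∈ LieSubalgebra.lieSpan R L s, x ∈ V ∧ ∀ v ∈ V, ⁅x, v⁆ ∈ V from
    fun x hx ↦ (this x hx).1
  intro x hx
  induction hx using LieSubalgebra.lieSpan_induction with
  | mem x hx => exact ⟨hsV hx, hV x hx⟩
  | zero => exact ⟨V.zero_mem, fun v _ ↦ by rw [zero_lie]; exact V.zero_mem⟩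
  | add x y _ _ hx hy =>
    exact ⟨V.add_mem hx.1 hy.1, fun v hv ↦ by
      rw [add_lie]; exact V.add_mem (hx.2 v hv) (hy.2 v hv)⟩
  | smul a x _ hx =>
    exact ⟨V.smul_mem a hx.1, fun v hv ↦ by rw [smul_lie]; exact V.smul_mem a (hx.2 v hv)⟩
  | lie x y _ _ hx hy =>
    exact ⟨hx.2 y hy.1, fun v hv ↦ by
      rw [lie_lie]; exact V.sub_mem (hx.2 _ (hy.2 v hv)) (hy.2 _ (hx.2 v hv))⟩

lemma lie_mem_of_mem_lieSpan {P : Submodule R L} {z : L} (hz : ∀ x ∈ s, ⁅z, x⁆ ∈ P)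
    (hP : ∀ p ∈ P, ∀ x ∈ LieSubalgebra.lieSpan R L s, ⁅p, x⁆ ∈ P)
    {x : L} (hx : x ∈ LieSubalgebra.lieSpan R L s) : ⁅z, x⁆ ∈ P := by
  induction hx using LieSubalgebra.lieSpan_induction with
  | mem x hx => exact hz x hx
  | zero => rw [lie_zero]; exact P.zero_mem
  | add x y _ _ hx hy => rw [lie_add]; exact P.add_mem hx hy
  | smul a x _ hx => rw [lie_smul]; exact P.smul_mem a hx
  | lie x y hxs hys hx hy =>
    rw [leibniz_lie, ← lie_skew x]
    exact P.add_mem (hP _ hx y hys) (P.neg_mem (hP _ hy x hxs))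

lemma toSubmodule_lieSpan_le_biSup_eigenspace {σ : L →ₗ⁅R⁆ L} {c : R}
    (hs : ∀ x ∈ s, σ x = c • x) {S : Set R} (hc : c ∈ S) (hS : ∀ μ ∈ S, c * μ ∈ S) :
    (LieSubalgebra.lieSpan R L s).toSubmodule ≤
      ⨆ μ ∈ S, Module.End.eigenspace (σ : L →ₗ[R] L) μ := by
  refine toSubmodule_lieSpan_le (fun x hx ↦ ?_) fun x hx ↦ ?_
  · exact Submodule.mem_iSup_of_mem c <| Submodule.mem_iSup_of_mem hc <|
      Module.End.mem_eigenspace_iff.2 (hs x hx)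
  · suffices (⨆ μ ∈ S, Module.End.eigenspace (σ : L →ₗ[R] L) μ) ≤
        (⨆ μ ∈ S, Module.End.eigenspace (σ : L →ₗ[R] L) μ).comap (LieAlgebra.ad R L x : L →ₗ[R] L)
      from fun v hv ↦ this hv
    refine iSup₂_le fun μ hμ v hv ↦ ?_
    have hv' : σ v = μ • v := Module.End.mem_eigenspace_iff.1 hv
    refine Submodule.mem_iSup_of_mem (c * μ) <| Submodule.mem_iSup_of_mem (hS μ hμ) <|
      Module.End.mem_eigenspace_iff.2 ?_
    simp only [LieHom.coe_toLinearMap, LieAlgebra.ad_apply, LieHom.map_lie, hs x hx, hv', smul_lie,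
      lie_smul, smul_smul, mul_comm]

end LieSpan

section TriangularSum

open LieSubalgebra

variable {R L B : Type*} [CommRing R] [LieRing L] [LieAlgebra R L]
  {A : Matrix B B ℤ} {e f h : B → L}

namespace IsChevalleySystem

lemma lie_mem_lieSpan_range_f (hs : IsChevalleySystem A e f h) {t n : L}
    (ht : t ∈ Submodule.span R (Set.range h)) (hn : n ∈ lieSpan R L (Set.range f)) :
    ⁅t, n⁆ ∈ lieSpan R L (Set.range f) := by
  induction ht using Submodule.span_induction with
  | mem _ hi =>
    obtain ⟨i, rfl⟩ := hi
    refine lie_mem_of_mem_lieSpan (P := (lieSpan R L (Set.range f)).toSubmodule) ?_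
      (fun p hp x hx ↦ lie_mem _ hp hx) hn
    rintro _ ⟨j, rfl⟩
    rw [hs.lie_h_f]
    exact neg_mem (zsmul_mem (subset_lieSpan (Set.mem_range_self j)) _)
  | zero => rw [zero_lie]; exact zero_mem _
  | add x y _ _ hx hy => rw [add_lie]; exact add_mem hx hy
  | smul a x _ hx => rw [smul_lie]; exact LieSubalgebra.smul_mem _ a hx

lemma lie_e_mem_lieSpan_range_f_sup (hs : IsChevalleySystem A e f h) (i : B) {n : L}
    (hn : n ∈ lieSpan R L (Set.range f)) :
    ⁅e i, n⁆ ∈ (lieSpan R L (Set.range f)).toSubmodule ⊔ Submodule.span R (Set.range h) := by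
  refine lie_mem_of_mem_lieSpan ?_ (fun p hp x hx ↦ ?_) hn
  · rintro _ ⟨j, rfl⟩
    rcases eq_or_ne i j with rfl | hij
    · rw [hs.lie_e_f_same]
      exact Submodule.mem_sup_right (Submodule.subset_span ⟨i, rfl⟩)
    · rw [hs.lie_e_f_ne i j hij]
      exact zero_mem _
  · obtain ⟨n', hn', t, ht, rfl⟩ := Submodule.mem_sup.1 hp
    rw [add_lie]
    exact Submodule.mem_sup_left (add_mem (lie_mem _ hn' hx) (hs.lie_mem_lieSpan_range_f ht hx))

lemma lie_e_mem_sup (hs : IsChevalleySystem A e f h) (i : B) {v : L}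
    (hv : v ∈ (lieSpan R L (Set.range f)).toSubmodule ⊔ Submodule.span R (Set.range h) ⊔
      (lieSpan R L (Set.range e)).toSubmodule) :
    ⁅e i, v⁆ ∈ (lieSpan R L (Set.range f)).toSubmodule ⊔ Submodule.span R (Set.range h) ⊔
      (lieSpan R L (Set.range e)).toSubmodule := by
  have hi : e i ∈ lieSpan R L (Set.range e) := subset_lieSpan ⟨i, rfl⟩
  obtain ⟨w, hw, p, hp, rfl⟩ := Submodule.mem_sup.1 hv
  obtain ⟨n, hn, t, ht, rfl⟩ := Submodule.mem_sup.1 hw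
  have ht' : t ∈ Submodule.span R (Set.range (-h)) := by
    rwa [← Set.neg_range', Submodule.span_neg]
  have het : ⁅e i, t⁆ ∈ lieSpan R L (Set.range e) := by
    rw [← lie_skew]
    exact neg_mem (hs.symm.lie_mem_lieSpan_range_f ht' hi)
  rw [lie_add, lie_add]
  exact add_mem (add_mem (Submodule.mem_sup_left (hs.lie_e_mem_lieSpan_range_f_sup i hn))
    (Submodule.mem_sup_right het)) (Submodule.mem_sup_right (lie_mem _ hi hp))

lemma lie_f_mem_sup (hs : IsChevalleySystem A e f h) (i : B) {v : L}
    (hv : v ∈ (lieSpan R L (Set.range f)).toSubmodule ⊔ Submodule.span R (Set.range h) ⊔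
      (lieSpan R L (Set.range e)).toSubmodule) :
    ⁅f i, v⁆ ∈ (lieSpan R L (Set.range f)).toSubmodule ⊔ Submodule.span R (Set.range h) ⊔
      (lieSpan R L (Set.range e)).toSubmodule := by
  have key := hs.symm.lie_e_mem_sup (R := R) i (v := v)
  rw [← Set.neg_range', Submodule.span_neg, sup_assoc, sup_comm, sup_comm (Submodule.span _ _)]
    at key
  exact key hv

variable (R) in
lemma toSubmodule_lieSpan_le_sup (hs : IsChevalleySystem A e f h) :
    (lieSpan R L (Set.range e ∪ Set.range f)).toSubmodule ≤
      (lieSpan R L (Set.range f)).toSubmodule ⊔ Submodule.span R (Set.range h) ⊔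
        (lieSpan R L (Set.range e)).toSubmodule := by
  refine toSubmodule_lieSpan_le ?_ ?_
  · rintro _ (⟨i, rfl⟩ | ⟨i, rfl⟩)
    · exact Submodule.mem_sup_right (subset_lieSpan ⟨i, rfl⟩)
    · exact Submodule.mem_sup_left (Submodule.mem_sup_left (subset_lieSpan ⟨i, rfl⟩))
  · rintro _ (⟨i, rfl⟩ | ⟨i, rfl⟩) v hv
    · exact hs.lie_e_mem_sup i hv
    · exact hs.lie_f_mem_sup i hv

end IsChevalleySystem

lemma iSupIndep_biSup_of_pairwise_disjoint {α ι κ : Type*} [CompleteLattice α] [IsModularLattice α]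
    [IsCompactlyGenerated α] {g : ι → α} (hg : iSupIndep g) {S : κ → Set ι}
    (hS : Pairwise fun a b ↦ Disjoint (S a) (S b)) : iSupIndep fun a ↦ ⨆ i ∈ S a, g i := by
  intro a
  have disj : Disjoint (S a) (⋃ (b) (_ : b ≠ a), S b) := by
    simp only [Set.disjoint_iUnion_right]
    exact fun b hb ↦ hS hb.symm
  simpa only [Set.mem_iUnion, iSup_exists, iSup_comm (ι' := ι)] using
    hg.disjoint_biSup_biSup disj

lemma iSupIndep_of_map_eq_smul {K L B : Type*} [Field K] [LinearOrder K] [IsStrictOrderedRing K]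
    [LieRing L] [LieAlgebra K L] {e f h : B → L} {σ : L →ₗ⁅K⁆ L} {c : K} (hc : 1 < c)
    (he : ∀ i, σ (e i) = c • e i) (hf : ∀ i, σ (f i) = c⁻¹ • f i) (hh : ∀ i, σ (h i) = h i) :
    iSupIndep ![(lieSpan K L (Set.range f)).toSubmodule, Submodule.span K (Set.range h),
      (lieSpan K L (Set.range e)).toSubmodule] := by
  have hc₀ : 0 < c := one_pos.trans hc
  have indep : iSupIndep fun a ↦ ⨆ μ ∈ ![Set.Ioo 0 1, {1}, Set.Ioi (1 : K)] a,
      Module.End.eigenspace (σ : L →ₗ[K] L) μ := by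
    refine iSupIndep_biSup_of_pairwise_disjoint (Module.End.eigenspaces_iSupIndep _) ?_
    refine (pairwise_disjoint_on _).2 ?_
    simp +contextual [Fin.forall_fin_succ, Set.disjoint_left, LT.lt.ne, le_of_lt]
  refine indep.mono fun a ↦ ?_
  fin_cases a
  · refine toSubmodule_lieSpan_le_biSup_eigenspace (Set.forall_mem_range.2 hf)
      ⟨inv_pos.2 hc₀, inv_lt_one_of_one_lt₀ hc⟩ fun μ hμ ↦ ?_
    exact ⟨mul_pos (inv_pos.2 hc₀) hμ.1, mul_lt_one_of_nonneg_of_lt_one_left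
      (inv_pos.2 hc₀).le (inv_lt_one_of_one_lt₀ hc) hμ.2.le⟩
  · refine Submodule.span_le.2 (Set.range_subset_iff.2 fun i ↦ ?_)
    refine Submodule.mem_iSup_of_mem 1 (Submodule.mem_iSup_of_mem rfl ?_)
    simp [hh i]
  · exact toSubmodule_lieSpan_le_biSup_eigenspace (Set.forall_mem_range.2 he) hc
      fun μ hμ ↦ one_lt_mul_of_lt_of_le hc (le_of_lt hμ)

end TriangularSum

section Presentation

open CartanMatrix FreeLieAlgebra

variable {B : Type*} [DecidableEq B] (A : Matrix B B ℤ)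

/-- The quotient map from the free Lie algebra on the generators to `g(A)`. -/
def toKM : FreeLieAlgebra ℚ (Generators B) →ₗ⁅ℚ⁆ Matrix.ToLieAlgebra ℚ A where
  toFun := LieSubmodule.Quotient.mk (N := Relations.toIdeal ℚ A)
  map_add' _ _ := rfl
  map_smul' _ _ := rfl
  map_lie' := rfl

lemma toKM_of (g : Generators B) : toKM A (of ℚ g) = KMgen A g := rfl

lemma toKM_eq_zero_of_mem {y : FreeLieAlgebra ℚ (Generators B)} (hy : y ∈ Relations.toSet ℚ A) :
    toKM A y = 0 :=
  (LieSubmodule.Quotient.mk_eq_zero' (N := Relations.toIdeal ℚ A)).2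
    (LieSubmodule.subset_lieSpan hy)

lemma isChevalleySystem_gE_gF_gH : IsChevalleySystem A (gE A) (gF A) (gH A) where
  lie_h_h i j := toKM_eq_zero_of_mem A (y := Relations.HH ℚ (i, j)) (by simp [Relations.toSet])
  lie_e_f_same i := by
    have key := toKM_eq_zero_of_mem A (y := Relations.EF ℚ (i, i)) (by simp [Relations.toSet])
    simpa [Relations.EF, toKM_of, gE, gF, gH, sub_eq_zero] using key
  lie_e_f_ne i j hij := by
    have key := toKM_eq_zero_of_mem A (y := Relations.EF ℚ (i, j)) (by simp [Relations.toSet])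
    simpa [Relations.EF, hij, toKM_of, gE, gF] using key
  lie_h_e i j := by
    have key := toKM_eq_zero_of_mem A (y := Relations.HE ℚ A (i, j)) (by simp [Relations.toSet])
    simpa [Relations.HE, toKM_of, gE, gF, gH, sub_eq_zero] using key
  lie_h_f i j := by
    have key := toKM_eq_zero_of_mem A (y := Relations.HF ℚ A (i, j)) (by simp [Relations.toSet])
    simpa [Relations.HF, toKM_of, gH, gF, add_eq_zero_iff_eq_neg] using key

lemma serreElement_gE (i j : B) : serreElement ℚ A (gE A) i j = 0 :=
  (map_serreElement (toKM A) i j).symm.trans <|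
    toKM_eq_zero_of_mem A (y := Relations.adE ℚ A (i, j)) (by simp [Relations.toSet])

lemma serreElement_gF (i j : B) : serreElement ℚ A (gF A) i j = 0 :=
  (map_serreElement (toKM A) i j).symm.trans <|
    toKM_eq_zero_of_mem A (y := Relations.adF ℚ A (i, j)) (by simp [Relations.toSet])

lemma lieSpan_gE_union_gF :
    LieSubalgebra.lieSpan ℚ (Matrix.ToLieAlgebra ℚ A) (Set.range (gE A) ∪ Set.range (gF A)) =
      ⊤ := by
  set K := LieSubalgebra.lieSpan ℚ (Matrix.ToLieAlgebra ℚ A) (Set.range (gE A) ∪ Set.range (gF A))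
  have hE (i : B) : gE A i ∈ K := LieSubalgebra.subset_lieSpan (Or.inl ⟨i, rfl⟩)
  have hF (i : B) : gF A i ∈ K := LieSubalgebra.subset_lieSpan (Or.inr ⟨i, rfl⟩)
  have hH (i : B) : gH A i ∈ K := by
    rw [← (isChevalleySystem_gE_gF_gH A).lie_e_f_same i]
    exact K.lie_mem (hE i) (hF i)
  have gen (g : Generators B) : KMgen A g ∈ K := by
    cases g with
    | H i => exact hH i
    | E i => exact hE i
    | F i => exact hF i
  have factor : K.incl.comp (lift ℚ fun g ↦ (⟨KMgen A g, gen g⟩ : K)) = toKM A :=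
    hom_ext fun g ↦ by simp [toKM_of]
  refine eq_top_iff.2 fun x _ ↦ ?_
  obtain ⟨y, rfl⟩ : ∃ y, toKM A y = x := Quot.mk_surjective x
  rw [← factor]
  exact SetLike.coe_mem _

variable {A} in
theorem exists_lieHom_of_isChevalleySystem {L : Type*} [LieRing L] [LieAlgebra ℚ L]
    {e f h : B → L} (hs : IsChevalleySystem A e f h) (he : ∀ i j, serreElement ℚ A e i j = 0)
    (hf : ∀ i j, serreElement ℚ A f i j = 0) :
    ∃ φ : Matrix.ToLieAlgebra ℚ A →ₗ⁅ℚ⁆ L,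
      (∀ i, φ (gE A i) = e i) ∧ (∀ i, φ (gF A i) = f i) ∧ ∀ i, φ (gH A i) = h i := by
  let ψ : FreeLieAlgebra ℚ (Generators B) →ₗ⁅ℚ⁆ L :=
    lift ℚ fun | .H i => h i | .E i => e i | .F i => f i
  have hψH (i : B) : ψ (of ℚ (.H i)) = h i := lift_of_apply ..
  have hψE (i : B) : ψ (of ℚ (.E i)) = e i := lift_of_apply ..
  have hψF (i : B) : ψ (of ℚ (.F i)) = f i := lift_of_apply ..
  have hker : Relations.toIdeal ℚ A ≤ ψ.ker := by
    refine LieSubmodule.lieSpan_le.2 ?_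
    rintro y (((((⟨⟨i, j⟩, rfl⟩ | ⟨⟨i, j⟩, rfl⟩) | ⟨⟨i, j⟩, rfl⟩) | ⟨⟨i, j⟩, rfl⟩) |
      ⟨⟨i, j⟩, rfl⟩) | ⟨⟨i, j⟩, rfl⟩) <;> refine ψ.mem_ker.2 ?_
    · simp [Relations.HH, hψH, hs.lie_h_h]
    · rcases eq_or_ne i j with rfl | hij
      · simp [Relations.EF, hψE, hψF, hψH, hs.lie_e_f_same]
      · simp [Relations.EF, hij, hψE, hψF, hs.lie_e_f_ne i j hij]
    · simp [Relations.HE, hψH, hψE, hs.lie_h_e]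
    · simp [Relations.HF, hψH, hψF, hs.lie_h_f]
    · exact (map_serreElement ψ i j).trans <|
        (congrArg (serreElement ℚ A · i j) (funext hψE)).trans (he i j)
    · exact (map_serreElement ψ i j).trans <|
        (congrArg (serreElement ℚ A · i j) (funext hψF)).trans (hf i j)
  let φ : Matrix.ToLieAlgebra ℚ A →ₗ⁅ℚ⁆ L :=
    { Submodule.liftQ (Relations.toIdeal ℚ A).toSubmodule ψ.toLinearMap
        fun _ hy ↦ hker hy with
      map_lie' := by
        rintro ⟨x⟩ ⟨y⟩
        exact ψ.map_lie x y }
  exact ⟨φ, hψE, hψF, hψH⟩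

end Presentation

section HighestWeight

open Module

attribute [local instance] LieRing.ofAssociativeRing

section Stability

variable {R V V' B : Type*} [CommRing R] [AddCommGroup V] [Module R V] [AddCommGroup V']
  [Module R V'] (W : Submodule R V) (ε : V →ₗ[R] V') (E : B → End R V)

/-- The Lie algebra of endomorphisms of `V` mapping the submodule `W` into itself. -/
def stabilizerEnd : LieSubalgebra R (End R V) where
  __ := Submodule.compatibleMaps W W
  lie_mem' hX hY _ hv := W.sub_mem (hX (hY hv)) (hY (hX hv))

variable {W} in
lemma mem_stabilizerEnd {X : End R V} : X ∈ stabilizerEnd W ↔ ∀ v ∈ W, X v ∈ W := Iff.rfl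

/-- The action of the stabilizer of `W` on the quotient `V ⧸ W`. -/
def stabilizerEndMapQ : stabilizerEnd W →ₗ⁅R⁆ End R (V ⧸ W) where
  __ := Submodule.mapQLinear W W
  map_lie' := Submodule.linearMap_qext _ rfl

variable {W} in
lemma serreElement_stabilizerEndMapQ_eq_zero {A : Matrix B B ℤ} {X : B → stabilizerEnd W} {i j : B}
    (hX : LinearMap.range (serreElement R A (fun i ↦ (X i : End R V)) i j) ≤ W) :
    serreElement R A (stabilizerEndMapQ W ∘ X) i j = 0 := by
  have coe_serre : ((serreElement R A X i j : stabilizerEnd W) : End R V) =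
      serreElement R A (fun i ↦ (X i : End R V)) i j :=
    map_serreElement (stabilizerEnd W).incl i j
  rw [← map_serreElement]
  refine Submodule.linearMap_qext _ (LinearMap.ext fun v ↦ ?_)
  refine (Submodule.Quotient.mk_eq_zero W).2 ?_
  exact coe_serre ▸ hX ⟨v, rfl⟩

/-- The largest submodule of the kernel of `ε` which is stable under all `E i`. -/
def stableKer : Submodule R V := sSup {U | U ≤ LinearMap.ker ε ∧ ∀ i, E i ∈ stabilizerEnd U}

lemma stableKer_le_ker : stableKer ε E ≤ LinearMap.ker ε := sSup_le fun _ hU ↦ hU.1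

variable {ε E} in
lemma le_stableKer {U : Submodule R V} (hU : U ≤ LinearMap.ker ε)
    (hE : ∀ i, E i ∈ stabilizerEnd U) : U ≤ stableKer ε E := le_sSup ⟨hU, hE⟩

lemma mem_stabilizerEnd_stableKer (i : B) : E i ∈ stabilizerEnd (stableKer ε E) := by
  suffices stableKer ε E ≤ (stableKer ε E).comap (E i) from fun v hv ↦ this hv
  exact sSup_le fun U hU v hv ↦ le_sSup (a := U) hU (hU.2 i hv)

variable {ε E} in
lemma mem_stabilizerEnd_stableKer_of_lie {X : End R V} (hX : ∀ v ∈ stableKer ε E, ε (X v) = 0)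
    (hE : ∀ i, ⁅E i, X⁆ ∈ stabilizerEnd (stableKer ε E)) :
    X ∈ stabilizerEnd (stableKer ε E) := by
  set W := stableKer ε E
  suffices W ⊔ W.map X ≤ W from fun v hv ↦ this (Submodule.mem_sup_right ⟨v, hv, rfl⟩)
  refine le_stableKer (sup_le (stableKer_le_ker ε E) ?_) fun i ↦ mem_stabilizerEnd.2 ?_
  · rintro _ ⟨v, hv, rfl⟩
    exact hX v hv
  · intro u hu
    obtain ⟨w, hw, _, ⟨v, hv, rfl⟩, rfl⟩ := Submodule.mem_sup.1 hu
    have hEw : E i w ∈ W := mem_stabilizerEnd_stableKer ε E i hw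
    have hEv : E i v ∈ W := mem_stabilizerEnd_stableKer ε E i hv
    have swap : E i (X v) = ⁅E i, X⁆ v + X (E i v) := by
      rw [LieRing.of_associative_ring_bracket]
      simp
    rw [map_add, swap, ← add_assoc]
    exact add_mem (Submodule.mem_sup_left (add_mem hEw (hE i hv)))
      (Submodule.mem_sup_right ⟨_, hEv, rfl⟩)

variable {ε E} in
lemma range_le_stableKer {X : End R V} (hX : ε ∘ₗ X = 0) (hE : ∀ i, ⁅E i, X⁆ = 0) :
    LinearMap.range X ≤ stableKer ε E := by
  refine le_stableKer (LinearMap.range_le_ker_iff.2 hX) fun i ↦ mem_stabilizerEnd.2 ?_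
  rintro _ ⟨v, rfl⟩
  have comm : E i * X = X * E i := sub_eq_zero.1 (hE i)
  exact ⟨E i v, (LinearMap.congr_fun comm v).symm⟩

end Stability

section Verma

variable {R V B : Type*} [CommRing R] [AddCommGroup V] [Module R V] (b : Basis (List B) R V)

/-- The operator `f i` on the universal highest-weight module of the Chevalley relations. Without
the Serre relations the `f i` generate a free associative algebra, so that module has a basis `b`
indexed by the words in the letters `i`, the empty word giving the highest-weight vector. -/
def vermaF (i : B) : End R V := b.constr R fun w ↦ b (i :: w)

variable (A : Matrix B B ℤ) (l : B → R)

/-- The eigenvalue of `h i` on the basis vector of the word `w`, for the highest weight `l`. -/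
def vermaWeight (i : B) (w : List B) : R := l i - ((w.map (A i)).sum : ℤ)

/-- The operator `h i` on the universal module of highest weight `l`. -/
def vermaH (i : B) : End R V := b.constr R fun w ↦ vermaWeight A l i w • b w

/-- The value of `vermaE` on the basis vector of a word. The recursion expresses that `e i` kills
the highest-weight vector and that `e i (f j v) = f j (e i v) + δ i j • h i v`. -/
def vermaEWord [DecidableEq B] (i : B) : List B → V
  | [] => 0
  | j :: w => vermaF b j (vermaEWord i w) + if i = j then vermaWeight A l i w • b w else 0

/-- The operator `e i` on the universal module of highest weight `l`. -/
def vermaE [DecidableEq B] (i : B) : End R V := b.constr R (vermaEWord b A l i)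

@[simp]
lemma vermaF_basis (i : B) (w : List B) : vermaF b i (b w) = b (i :: w) := b.constr_basis ..

@[simp]
lemma vermaH_basis (i : B) (w : List B) :
    vermaH b A l i (b w) = vermaWeight A l i w • b w := b.constr_basis ..

@[simp]
lemma vermaE_basis [DecidableEq B] (i : B) (w : List B) :
    vermaE b A l i (b w) = vermaEWord b A l i w := b.constr_basis ..

lemma vermaWeight_cons (i j : B) (w : List B) :
    vermaWeight A l i (j :: w) = vermaWeight A l i w - A i j := by
  simp only [vermaWeight, List.map_cons, List.sum_cons, Int.cast_add]
  ring

lemma lie_vermaH_vermaH (i j : B) : ⁅vermaH b A l i, vermaH b A l j⁆ = 0 := by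
  refine b.ext fun w ↦ ?_
  simp [LieRing.of_associative_ring_bracket, smul_smul, mul_comm]

lemma lie_vermaH_vermaF (i j : B) :
    ⁅vermaH b A l i, vermaF b j⁆ = -(A i j • vermaF b j) := by
  refine b.ext fun w ↦ ?_
  simp [LieRing.of_associative_ring_bracket, vermaWeight_cons, sub_smul, Int.cast_smul_eq_zsmul]

variable {b} in
lemma eq_zero_of_lie_vermaF {X : End R V} (hX : ∀ i, ⁅X, vermaF b i⁆ = 0) (hvac : X (b []) = 0) :
    X = 0 := by
  refine b.ext fun w ↦ ?_
  induction w with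
  | nil => exact hvac
  | cons i w ih =>
    have comm : X * vermaF b i = vermaF b i * X := sub_eq_zero.1 (hX i)
    have comm_apply : X (vermaF b i (b w)) = vermaF b i (X (b w)) := LinearMap.congr_fun comm (b w)
    rw [← vermaF_basis, comm_apply, ih, LinearMap.zero_apply, map_zero, LinearMap.zero_apply]

variable [DecidableEq B]

lemma lie_vermaE_vermaF (i j : B) :
    ⁅vermaE b A l i, vermaF b j⁆ = if i = j then vermaH b A l i else 0 := by
  refine b.ext fun w ↦ ?_
  split_ifs with hij <;> simp [LieRing.of_associative_ring_bracket, vermaEWord, hij]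

lemma lie_vermaH_vermaE (i j : B) :
    ⁅vermaH b A l i, vermaE b A l j⁆ = A i j • vermaE b A l j := by
  refine sub_eq_zero.1 (eq_zero_of_lie_vermaF (b := b) (fun k ↦ ?_) ?_)
  · rw [sub_lie, lie_lie, zsmul_lie, lie_vermaE_vermaF, lie_vermaH_vermaF, lie_neg, lie_zsmul,
      lie_vermaE_vermaF]
    split_ifs with hjk
    · simp [hjk, lie_vermaH_vermaH]
    · simp
  · simp [LieRing.of_associative_ring_bracket, vermaEWord]

theorem isChevalleySystem_verma :
    IsChevalleySystem A (vermaE b A l) (vermaF b) (vermaH b A l) where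
  lie_h_h := lie_vermaH_vermaH b A l
  lie_e_f_same i := by rw [lie_vermaE_vermaF, if_pos rfl]
  lie_e_f_ne i j hij := by rw [lie_vermaE_vermaF, if_neg hij]
  lie_h_e := lie_vermaH_vermaE b A l
  lie_h_f := lie_vermaH_vermaF b A l

variable {A} in
lemma serreElement_vermaE (hA : IsGCM A) (i j : B) : serreElement R A (vermaE b A l) i j = 0 := by
  refine eq_zero_of_lie_vermaF (b := b) (fun k ↦ ?_) ?_
  · rw [← lie_skew, (isChevalleySystem_verma b A l).symm.lie_e_serreElement_f R hA, neg_zero]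
  · refine serreElement_induction (p := fun X : End R V ↦ X (b []) = 0) ?_ fun X hX ↦ ?_
    · simp [LieRing.of_associative_ring_bracket, vermaEWord]
    · simp [LieRing.of_associative_ring_bracket, vermaEWord, hX]

end Verma

section IrreducibleQuotient

variable {R V B : Type*} [CommRing R] [AddCommGroup V] [Module R V] (b : Basis (List B) R V)
  (A : Matrix B B ℤ) (l : B → R)

lemma coord_nil_comp_vermaF (i : B) : b.coord [] ∘ₗ vermaF b i = 0 := by
  refine b.ext fun w ↦ ?_
  simp

lemma coord_nil_comp_vermaH (i : B) : b.coord [] ∘ₗ vermaH b A l i = l i • b.coord [] := by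
  refine b.ext fun w ↦ ?_
  cases w <;> simp [vermaWeight]

variable [DecidableEq B]

/-- The largest submodule of the universal module of highest weight `l` on which the coefficient of
the highest-weight vector vanishes. Only stability under the `e i` is imposed in the definition;
stability under the `h i` and `f i` follows. -/
def vermaRadical : Submodule R V := stableKer (b.coord []) (vermaE b A l)

lemma vermaE_mem_stabilizerEnd (i : B) : vermaE b A l i ∈ stabilizerEnd (vermaRadical b A l) :=
  mem_stabilizerEnd_stableKer _ _ i

lemma vermaH_mem_stabilizerEnd (i : B) : vermaH b A l i ∈ stabilizerEnd (vermaRadical b A l) := by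
  refine mem_stabilizerEnd_stableKer_of_lie (fun v hv ↦ ?_) fun j ↦ ?_
  · have hv₀ : b.coord [] v = 0 := stableKer_le_ker _ _ hv
    rw [← LinearMap.comp_apply, coord_nil_comp_vermaH, LinearMap.smul_apply, hv₀, smul_zero]
  · rw [← lie_skew, lie_vermaH_vermaE]
    exact neg_mem (zsmul_mem (vermaE_mem_stabilizerEnd b A l j) _)

lemma vermaF_mem_stabilizerEnd (i : B) : vermaF b i ∈ stabilizerEnd (vermaRadical b A l) := by
  refine mem_stabilizerEnd_stableKer_of_lie (fun v _ ↦ ?_) fun j ↦ ?_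
  · rw [← LinearMap.comp_apply, coord_nil_comp_vermaF, LinearMap.zero_apply]
  · rw [lie_vermaE_vermaF]
    split_ifs
    · exact vermaH_mem_stabilizerEnd b A l j
    · exact zero_mem _

variable {A} in
lemma range_serreElement_vermaF_le (hA : IsGCM A) (i j : B) :
    LinearMap.range (serreElement R A (vermaF b) i j) ≤ vermaRadical b A l := by
  refine range_le_stableKer ?_ fun k ↦
    (isChevalleySystem_verma b A l).lie_e_serreElement_f R hA k i j
  have coord_f (i : B) (v : V) : b.coord [] (vermaF b i v) = 0 :=
    LinearMap.congr_fun (coord_nil_comp_vermaF b i) v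
  refine serreElement_induction (p := fun X : End R V ↦ b.coord [] ∘ₗ X = 0) ?_ fun X hX ↦ ?_
  · ext v
    simp only [LieRing.of_associative_ring_bracket, LinearMap.comp_apply, LinearMap.sub_apply,
      Module.End.mul_apply, map_sub, coord_f, sub_zero, LinearMap.zero_apply]
  · have coord_X (v : V) : b.coord [] (X v) = 0 := LinearMap.congr_fun hX v
    ext v
    simp only [LieRing.of_associative_ring_bracket, LinearMap.comp_apply, LinearMap.sub_apply,
      Module.End.mul_apply, map_sub, coord_f, coord_X, sub_zero, LinearMap.zero_apply]

variable {A} in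
lemma exists_lieHom_vermaQuotient {V : Type*} [AddCommGroup V] [Module ℚ V]
    (b : Basis (List B) ℚ V) (hA : IsGCM A) (l : B → ℚ) :
    ∃ φ : Matrix.ToLieAlgebra ℚ A →ₗ⁅ℚ⁆ End ℚ (V ⧸ vermaRadical b A l),
      ∀ i v, φ (gH A i) ((vermaRadical b A l).mkQ v) =
        (vermaRadical b A l).mkQ (vermaH b A l i v) := by
  let e (i : B) : stabilizerEnd (vermaRadical b A l) := ⟨_, vermaE_mem_stabilizerEnd b A l i⟩
  let f (i : B) : stabilizerEnd (vermaRadical b A l) := ⟨_, vermaF_mem_stabilizerEnd b A l i⟩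
  let h (i : B) : stabilizerEnd (vermaRadical b A l) := ⟨_, vermaH_mem_stabilizerEnd b A l i⟩
  have hs : IsChevalleySystem A e f h :=
    .of_map (φ := LieSubalgebra.incl _) Subtype.coe_injective (isChevalleySystem_verma b A l)
  obtain ⟨φ, -, -, hφ⟩ := exists_lieHom_of_isChevalleySystem (hs.map (stabilizerEndMapQ _))
    (fun i j ↦ serreElement_stabilizerEndMapQ_eq_zero <|
      (LinearMap.range_eq_bot.2 (serreElement_vermaE b l hA i j)).trans_le bot_le)
    (fun i j ↦ serreElement_stabilizerEndMapQ_eq_zero <|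
      range_serreElement_vermaF_le b l hA i j)
  exact ⟨φ, fun i v ↦ by rw [hφ]; rfl⟩

variable {A} in
theorem exists_dual_gH (hA : IsGCM A) (l : B → ℚ) :
    ∃ χ : Dual ℚ (Matrix.ToLieAlgebra ℚ A), ∀ i, χ (gH A i) = l i := by
  obtain ⟨V, _, _, ⟨b⟩⟩ : ∃ (V : Type _) (_ : AddCommGroup V) (_ : Module ℚ V),
      Nonempty (Basis (List B) ℚ V) := ⟨List B →₀ ℚ, _, _, ⟨.ofRepr (.refl ..)⟩⟩
  obtain ⟨φ, hφ⟩ := exists_lieHom_vermaQuotient b hA l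
  let vacuumCoeff : V ⧸ vermaRadical b A l →ₗ[ℚ] ℚ :=
    (vermaRadical b A l).liftQ (b.coord []) (stableKer_le_ker _ _)
  refine ⟨vacuumCoeff ∘ₗ LinearMap.applyₗ ((vermaRadical b A l).mkQ (b [])) ∘ₗ φ.toLinearMap,
    fun i ↦ ?_⟩
  calc vacuumCoeff (φ (gH A i) ((vermaRadical b A l).mkQ (b [])))
      = b.coord [] (vermaH b A l i (b [])) := by rw [hφ]; exact Submodule.liftQ_apply ..
    _ = l i := by simp [vermaWeight]

variable {A} in
theorem linearIndependent_gH (hA : IsGCM A) : LinearIndependent ℚ (gH A) := by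
  choose χ hχ using fun i ↦ exists_dual_gH hA (Pi.single i 1)
  exact .of_pairwise_dual_eq_zero_one (gH A) χ
    (fun i j hij ↦ (hχ i j).trans (Pi.single_eq_of_ne hij.symm 1))
    fun i ↦ (hχ i i).trans (Pi.single_eq_same i 1)

end IrreducibleQuotient

end HighestWeight

section Decomposition

variable {B : Type*} [DecidableEq B] (A : Matrix B B ℤ)

lemma exists_lieHom_scaling {c : ℚ} (hc : c ≠ 0) :
    ∃ σ : Matrix.ToLieAlgebra ℚ A →ₗ⁅ℚ⁆ Matrix.ToLieAlgebra ℚ A,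
      (∀ i, σ (gE A i) = c • gE A i) ∧ (∀ i, σ (gF A i) = c⁻¹ • gF A i) ∧
        ∀ i, σ (gH A i) = gH A i := by
  refine exists_lieHom_of_isChevalleySystem
    ((isChevalleySystem_gE_gF_gH A).smul_inv_smul (Units.mk0 c hc))
    (fun i j ↦ (serreElement_smul c i j).trans ?_) fun i j ↦ (serreElement_smul c⁻¹ i j).trans ?_
  · rw [serreElement_gE, smul_zero]
  · rw [serreElement_gF, smul_zero]

theorem isInternal_lieSpan_gF_span_gH_lieSpan_gE :
    DirectSum.IsInternal fun t : Fin 3 ↦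
      ![(LieSubalgebra.lieSpan ℚ (Matrix.ToLieAlgebra ℚ A) (Set.range (gF A))).toSubmodule,
        Submodule.span ℚ (Set.range (gH A)),
        (LieSubalgebra.lieSpan ℚ (Matrix.ToLieAlgebra ℚ A) (Set.range (gE A))).toSubmodule] t := by
  obtain ⟨σ, hE, hF, hH⟩ := exists_lieHom_scaling A two_ne_zero
  refine (DirectSum.isInternal_submodule_iff_iSupIndep_and_iSup_eq_top _).2
    ⟨iSupIndep_of_map_eq_smul one_lt_two hE hF hH, ?_⟩
  have span := (isChevalleySystem_gE_gF_gH A).toSubmodule_lieSpan_le_sup ℚ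
  rw [lieSpan_gE_union_gF, LieSubalgebra.top_toSubmodule, top_le_iff] at span
  rw [iSup_fin_three]
  exact span

variable {A} in
theorem triangular_decomposition_general (hA : IsGCM A) :
    DirectSum.IsInternal
      (fun t : Fin 3 =>
        ![(LieSubalgebra.lieSpan ℚ (Matrix.ToLieAlgebra ℚ A) (Set.range (gF A))).toSubmodule,
          Submodule.span ℚ (Set.range (gH A)),
          (LieSubalgebra.lieSpan ℚ (Matrix.ToLieAlgebra ℚ A) (Set.range (gE A))).toSubmodule] t) ∧
    LinearIndependent ℚ (gH A) ∧
    Module.rank ℚ (Submodule.span ℚ (Set.range (gH A))) = Cardinal.mk B :=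
  ⟨isInternal_lieSpan_gF_span_gH_lieSpan_gE A, linearIndependent_gH hA,
    (rank_span (linearIndependent_gH hA)).trans
      (Cardinal.mk_range_eq _ (linearIndependent_gH hA).injective)⟩

end Decomposition

/-- **Triangular decomposition.** For any generalized Cartan matrix `A` of size `k`, the
Kac–Moody algebra `g(A)` over `ℚ` is the internal direct sum of the Lie subalgebra `N₋`
generated by the `f i`, the span `H` of the `h i`, and the Lie subalgebra `N₊` generated by
the `e i`; moreover the `h i` are linearly independent, so `dim H = k`. -/
theorem triangular_decomposition {k : ℕ} (A : Matrix (Fin k) (Fin k) ℤ) (hA : IsGCM A) :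
    DirectSum.IsInternal
      (fun t : Fin 3 =>
        ![(LieSubalgebra.lieSpan ℚ (Matrix.ToLieAlgebra ℚ A)
            (Set.range (gF A))).toSubmodule,
          Submodule.span ℚ (Set.range (gH A)),
          (LieSubalgebra.lieSpan ℚ (Matrix.ToLieAlgebra ℚ A)
            (Set.range (gE A))).toSubmodule] t) ∧
    LinearIndependent ℚ (gH A) ∧
    Module.finrank ℚ (Submodule.span ℚ (Set.range (gH A))) = k :=
  let ⟨internal, indep, rank⟩ := triangular_decomposition_general hA
  ⟨internal, indep, Module.finrank_eq_of_rank_eq (rank.trans (Cardinal.mk_fin k))⟩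
end
end

section
/- Level-zero subalgebra: let A be a generalized Cartan matrix of size k, fix an index i₀, and let D be the level derivation of g(A) with respect to i₀ (D(e_{i₀}) = e_{i₀}, D(f_{i₀}) = −f_{i₀}, D vanishing on all other generators). Then the eigenspace g_0 of D with eigenvalue 0 is exactly the Lie subalgebra of g(A) generated by {h_1,…,h_k} ∪ {e_j, f_j : j ≠ i₀}. -/
noncomputable section

open CartanMatrix

/-!
A Lie algebra generated by `H ∪ E ∪ F`, where `H` normalizes the subalgebras generated by `E` and by
`F` and `⁅E, F⁆` lies in the subalgebra generated by `H`, is the sum of these three subalgebras.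
Suppose that the elements of `H`, `E`, `F` are eigenvectors of a derivation `D` with eigenvalues
zero, `≥ 0` and `≤ 0` respectively, and let `T` be the subalgebra generated by those of eigenvalue
zero. Eigenvalues of brackets add up, so `T` together with the eigenspaces of positive eigenvalues
is a subalgebra, which contains `E`; similarly for `F`. The whole algebra is therefore the sum of
`T` and of nonzero eigenspaces, and as eigenspaces are independent the zero eigenspace is `T`.
-/

open LieAlgebra LieSubalgebra Module.End

section TriangularDecomposition

variable {R L : Type*} [CommRing R] [LieRing L] [LieAlgebra R L]

theorem lieSpan_le_of_forall_le_comap_ad {s : Set L} {P : Submodule R L} (hs : s ⊆ P)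
    (hP : ∀ x ∈ s, P ≤ P.comap (ad R L x)) : (lieSpan R L s).toSubmodule ≤ P := by
  have stable : ∀ x ∈ lieSpan R L s, ∀ y ∈ P, ⁅x, y⁆ ∈ P := by
    intro x hx
    induction hx using lieSpan_induction with
    | mem x hx => exact hP x hx
    | zero => simp
    | add x z _ _ hx hz => exact fun y hy => add_lie x z y ▸ P.add_mem (hx y hy) (hz y hy)
    | smul a x _ hx => exact fun y hy => smul_lie a x y ▸ P.smul_mem a (hx y hy)
    | lie x z _ _ hx hz =>
      exact fun y hy => lie_lie x z y ▸ P.sub_mem (hx _ (hz y hy)) (hz _ (hx y hy))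
  intro x hx
  induction hx using lieSpan_induction with
  | mem x hx => exact hs hx
  | zero => exact P.zero_mem
  | add x z _ _ hx hz => exact P.add_mem hx hz
  | smul a x _ hx => exact P.smul_mem a hx
  | lie x z hx _ _ hz => exact stable x hx z hz

theorem lieSpan_le_comap_ad {s : Set L} {P : Submodule R L}
    (hsP : (lieSpan R L s).toSubmodule ≤ P) (hP : P ≤ (lieSpan R L s).normalizer.toSubmodule)
    {y : L} (hy : ∀ x ∈ s, ⁅y, x⁆ ∈ P) :
    (lieSpan R L s).toSubmodule ≤ P.comap (ad R L y) := by
  intro x hx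
  change ⁅y, x⁆ ∈ P
  induction hx using lieSpan_induction with
  | mem x hx => exact hy x hx
  | zero => simp
  | add x z _ _ hx hz => exact lie_add y x z ▸ P.add_mem hx hz
  | smul a x _ hx => exact lie_smul a y x ▸ P.smul_mem a hx
  | lie x z hx hz hyx hyz =>
    rw [leibniz_lie]
    exact hsP (add_mem ((mem_normalizer_iff _ _).1 (hP hyx) z hz)
      ((mem_normalizer_iff' _ _).1 (hP hyz) x hx))

variable (R) in
/-- A Lie algebra generated by a Cartan part `H`, a raising part `E` and a lowering part `F`,
subject to the containments between brackets which force a triangular decomposition. -/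
structure IsTriangularSystem (H E F : Set L) : Prop where
  lie_raising_mem : ∀ h ∈ H, ∀ x ∈ E, ⁅h, x⁆ ∈ lieSpan R L E
  lie_lowering_mem : ∀ h ∈ H, ∀ y ∈ F, ⁅h, y⁆ ∈ lieSpan R L F
  lie_mem_cartan : ∀ x ∈ E, ∀ y ∈ F, ⁅x, y⁆ ∈ lieSpan R L H
  lieSpan_eq_top : lieSpan R L (H ∪ E ∪ F) = ⊤

namespace IsTriangularSystem

variable {H E F : Set L}

theorem symm (hT : IsTriangularSystem R H E F) : IsTriangularSystem R H F E where
  lie_raising_mem := hT.lie_lowering_mem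
  lie_lowering_mem := hT.lie_raising_mem
  lie_mem_cartan y hy x hx := by
    rw [← lie_skew]
    exact neg_mem (hT.lie_mem_cartan x hx y hy)
  lieSpan_eq_top := by rw [Set.union_right_comm, hT.lieSpan_eq_top]

theorem lieSpan_cartan_le_normalizer (hT : IsTriangularSystem R H E F) :
    lieSpan R L H ≤ (lieSpan R L E).normalizer :=
  lieSpan_le.2 fun h hh => (mem_normalizer_iff _ _).2 <|
    lieSpan_le_comap_ad le_rfl (lieSpan R L E).le_normalizer (hT.lie_raising_mem h hh)

theorem raising_lie_lowering (hT : IsTriangularSystem R H E F) {x : L} (hx : x ∈ E) :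
    (lieSpan R L F).toSubmodule ≤
      ((lieSpan R L H).toSubmodule ⊔ (lieSpan R L F).toSubmodule).comap (ad R L x) :=
  lieSpan_le_comap_ad (P := (lieSpan R L H).toSubmodule ⊔ (lieSpan R L F).toSubmodule) le_sup_right
    (sup_le hT.symm.lieSpan_cartan_le_normalizer (lieSpan R L F).le_normalizer)
    fun y hy => Submodule.mem_sup_left (hT.lie_mem_cartan x hx y hy)

variable (R H E F) in
/-- The sum `𝔥 + 𝔫₊ + 𝔫₋` of the subalgebras generated by the parts of a triangular system. -/
def triangularSum : Submodule R L :=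
  (lieSpan R L H).toSubmodule ⊔ (lieSpan R L E).toSubmodule ⊔ (lieSpan R L F).toSubmodule

theorem triangularSum_comm : triangularSum R H E F = triangularSum R H F E :=
  sup_right_comm ..

theorem triangularSum_le_comap_ad_cartan (hT : IsTriangularSystem R H E F) {h : L} (hh : h ∈ H) :
    triangularSum R H E F ≤ (triangularSum R H E F).comap (ad R L h) := by
  have hh' : h ∈ lieSpan R L H := subset_lieSpan hh
  refine sup_le (sup_le (fun y hy => ?_) fun y hy => ?_) fun y hy => ?_
  · exact Submodule.mem_sup_left (Submodule.mem_sup_left (lie_mem _ hh' hy))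
  · exact Submodule.mem_sup_left (Submodule.mem_sup_right
      ((mem_normalizer_iff _ _).1 (hT.lieSpan_cartan_le_normalizer hh') y hy))
  · exact Submodule.mem_sup_right
      ((mem_normalizer_iff _ _).1 (hT.symm.lieSpan_cartan_le_normalizer hh') y hy)

theorem triangularSum_le_comap_ad_raising (hT : IsTriangularSystem R H E F) {x : L} (hx : x ∈ E) :
    triangularSum R H E F ≤ (triangularSum R H E F).comap (ad R L x) := by
  have hx' : x ∈ lieSpan R L E := subset_lieSpan hx
  refine sup_le (sup_le (fun y hy => ?_) fun y hy => ?_) ?_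
  · exact Submodule.mem_sup_left (Submodule.mem_sup_right
      ((mem_normalizer_iff' _ _).1 (hT.lieSpan_cartan_le_normalizer hy) x hx'))
  · exact Submodule.mem_sup_left (Submodule.mem_sup_right (lie_mem _ hx' hy))
  · exact (hT.raising_lie_lowering hx).trans
      (Submodule.comap_mono (sup_le_sup_right le_sup_left _))

theorem triangularSum_eq_top (hT : IsTriangularSystem R H E F) : triangularSum R H E F = ⊤ := by
  have generators_subset : H ∪ E ∪ F ⊆ triangularSum R H E F :=
    Set.union_subset (Set.union_subset
      (fun _ h => Submodule.mem_sup_left (Submodule.mem_sup_left (subset_lieSpan h)))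
      (fun _ h => Submodule.mem_sup_left (Submodule.mem_sup_right (subset_lieSpan h))))
      (fun _ h => Submodule.mem_sup_right (subset_lieSpan h))
  have stable : ∀ x ∈ H ∪ E ∪ F,
      triangularSum R H E F ≤ (triangularSum R H E F).comap (ad R L x) := by
    rintro x ((hx | hx) | hx)
    · exact hT.triangularSum_le_comap_ad_cartan hx
    · exact hT.triangularSum_le_comap_ad_raising hx
    · rw [triangularSum_comm]
      exact hT.symm.triangularSum_le_comap_ad_raising hx
  rw [eq_top_iff, ← top_toSubmodule, ← hT.lieSpan_eq_top]
  exact lieSpan_le_of_forall_le_comap_ad generators_subset stable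

end IsTriangularSystem

end TriangularDecomposition

section Levels

variable {R L : Type*} [CommRing R] [LieRing L] [LieAlgebra R L] {D : LieDerivation R L L}

theorem lie_mem_eigenspace_add {μ ν : R} {x y : L} (hx : x ∈ eigenspace D.toLinearMap μ)
    (hy : y ∈ eigenspace D.toLinearMap ν) : ⁅x, y⁆ ∈ eigenspace D.toLinearMap (μ + ν) := by
  rw [mem_eigenspace_iff, LieDerivation.coeFn_coe] at hx hy ⊢
  rw [LieDerivation.apply_lie_eq_add, hx, hy, lie_smul, smul_lie, ← add_smul, add_comm]

variable (D) in
/-- The sum of the levels `n ∈ M` of a derivation, level `n` being the eigenspace with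
eigenvalue `n`. -/
def levelSum (M : Set ℤ) : Submodule R L :=
  ⨆ n ∈ M, eigenspace D.toLinearMap (n : R)

theorem eigenspace_le_levelSum {M : Set ℤ} {n : ℤ} (hn : n ∈ M) :
    eigenspace D.toLinearMap (n : R) ≤ levelSum D M :=
  le_biSup (fun n : ℤ => eigenspace D.toLinearMap (n : R)) hn

theorem levelSum_mono {M N : Set ℤ} (h : M ⊆ N) : levelSum D M ≤ levelSum D N :=
  biSup_mono h

theorem lie_mem_levelSum {M N P : Set ℤ} (hP : ∀ m ∈ M, ∀ n ∈ N, m + n ∈ P) {x y : L}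
    (hx : x ∈ levelSum D M) (hy : y ∈ levelSum D N) : ⁅x, y⁆ ∈ levelSum D P := by
  have lie_level : ∀ m ∈ M, ∀ x ∈ eigenspace D.toLinearMap (m : R),
      levelSum D N ≤ (levelSum D P).comap (ad R L x) := fun m hm x hx =>
    iSup₂_le fun n hn y hy => eigenspace_le_levelSum (hP m hm n hn) <|
      (Int.cast_add (R := R) m n).symm ▸ lie_mem_eigenspace_add hx hy
  have lie_levelSum : levelSum D M ≤ (levelSum D P).comap (ad R L y) :=
    iSup₂_le fun m hm x hx => by
      rw [Submodule.mem_comap, ad_apply, ← lie_skew]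
      exact neg_mem (lie_level m hm x hx hy)
  rw [← lie_skew]
  exact neg_mem (lie_levelSum hx)

theorem lieSpan_le_sup_levelSum {T : LieSubalgebra R L}
    (hT : T.toSubmodule ≤ eigenspace D.toLinearMap 0) {M : Set ℤ}
    (hM : ∀ m ∈ M, ∀ n ∈ M, m + n ∈ M) {s : Set L} (hs : ∀ x ∈ s, x ∈ T ∨ x ∈ levelSum D M) :
    (lieSpan R L s).toSubmodule ≤ T.toSubmodule ⊔ levelSum D M := by
  have hT₀ : T.toSubmodule ≤ levelSum D {0} :=
    hT.trans (by simpa using eigenspace_le_levelSum (D := D) (Set.mem_singleton 0))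
  refine lieSpan_le_of_forall_le_comap_ad
    (fun x hx => (hs x hx).elim Submodule.mem_sup_left Submodule.mem_sup_right) fun x hx => ?_
  obtain hx | hx := hs x hx
  · refine sup_le (fun y hy => Submodule.mem_sup_left (T.lie_mem hx hy)) fun y hy => ?_
    exact Submodule.mem_sup_right (lie_mem_levelSum (by simp) (hT₀ hx) hy)
  · refine sup_le (fun y hy => ?_) fun y hy => ?_
    · exact Submodule.mem_sup_right (lie_mem_levelSum (by simp) hx (hT₀ hy))
    · exact Submodule.mem_sup_right (lie_mem_levelSum hM hx hy)

theorem lieSpan_le_eigenspace_zero {s : Set L} (hs : ∀ x ∈ s, D x = 0) :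
    (lieSpan R L s).toSubmodule ≤ eigenspace D.toLinearMap 0 := fun x hx => by
  rw [mem_eigenspace_iff, zero_smul]
  exact LieDerivation.eqOn_lieSpan (D2 := 0) hs hx

theorem disjoint_eigenspace_zero_levelSum [IsDomain R] [CharZero R] [Module.IsTorsionFree R L] :
    Disjoint (eigenspace D.toLinearMap 0) (levelSum D {0}ᶜ) :=
  (eigenspaces_iSupIndep D.toLinearMap 0).mono_right <|
    iSup₂_le fun _ hn => le_biSup (eigenspace D.toLinearMap) (Int.cast_ne_zero.2 hn)

theorem IsTriangularSystem.sup_levelSum_eq_top {H E F : Set L} (hHEF : IsTriangularSystem R H E F)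
    {T : LieSubalgebra R L} (hT : T.toSubmodule ≤ eigenspace D.toLinearMap 0) (hH : H ⊆ T)
    (hE : ∀ x ∈ E, x ∈ T ∨ x ∈ levelSum D (Set.Ioi 0))
    (hF : ∀ y ∈ F, y ∈ T ∨ y ∈ levelSum D (Set.Iio 0)) :
    T.toSubmodule ⊔ levelSum D {0}ᶜ = ⊤ := by
  have cartan_le : (lieSpan R L H).toSubmodule ≤ T.toSubmodule :=
    (toSubmodule_le_toSubmodule _ _).2 (lieSpan_le.2 hH)
  have raising_le : (lieSpan R L E).toSubmodule ≤ T.toSubmodule ⊔ levelSum D (Set.Ioi 0) :=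
    lieSpan_le_sup_levelSum hT (fun m hm n hn => Int.add_pos hm hn) hE
  have lowering_le : (lieSpan R L F).toSubmodule ≤ T.toSubmodule ⊔ levelSum D (Set.Iio 0) :=
    lieSpan_le_sup_levelSum hT (fun m hm n hn => Int.add_neg hm hn) hF
  have pos_le : levelSum D (Set.Ioi 0) ≤ levelSum D {0}ᶜ := levelSum_mono fun n hn => ne_of_gt hn
  have neg_le : levelSum D (Set.Iio 0) ≤ levelSum D {0}ᶜ := levelSum_mono fun n hn => ne_of_lt hn
  rw [eq_top_iff, ← hHEF.triangularSum_eq_top]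
  exact sup_le (sup_le (cartan_le.trans le_sup_left) (raising_le.trans (sup_le_sup_left pos_le _)))
    (lowering_le.trans (sup_le_sup_left neg_le _))

theorem level_zero_subalgebra_general [IsDomain R] [CharZero R] [Module.IsTorsionFree R L]
    {ι : Type*} {H : Set L} {e f : ι → L}
    (hT : IsTriangularSystem R H (Set.range e) (Set.range f)) (s : ι → ℕ)
    (hDe : ∀ i, D (e i) = s i • e i) (hDf : ∀ i, D (f i) = -(s i • f i))
    (hDH : ∀ x ∈ H, D x = 0) :
    eigenspace D.toLinearMap 0 =
      (lieSpan R L (H ∪ {x | ∃ j, s j = 0 ∧ (x = e j ∨ x = f j)})).toSubmodule := by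
  set S : Set L := H ∪ {x | ∃ j, s j = 0 ∧ (x = e j ∨ x = f j)}
  have hS : (lieSpan R L S).toSubmodule ≤ eigenspace D.toLinearMap 0 := by
    refine lieSpan_le_eigenspace_zero ?_
    rintro x (hx | ⟨j, hj, rfl | rfl⟩)
    · exact hDH x hx
    · simp [hDe, hj]
    · simp [hDf, hj]
  have hE : ∀ x ∈ Set.range e, x ∈ lieSpan R L S ∨ x ∈ levelSum D (Set.Ioi 0) := by
    rintro _ ⟨i, rfl⟩
    obtain hi | hi := (s i).eq_zero_or_pos
    · exact .inl (subset_lieSpan (.inr ⟨i, hi, .inl rfl⟩))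
    · refine .inr (eigenspace_le_levelSum (n := s i) (by simpa using hi) ?_)
      simp [hDe, Nat.cast_smul_eq_nsmul]
  have hF : ∀ x ∈ Set.range f, x ∈ lieSpan R L S ∨ x ∈ levelSum D (Set.Iio 0) := by
    rintro _ ⟨i, rfl⟩
    obtain hi | hi := (s i).eq_zero_or_pos
    · exact .inl (subset_lieSpan (.inr ⟨i, hi, .inr rfl⟩))
    · refine .inr (eigenspace_le_levelSum (n := -s i) (by simpa using hi) ?_)
      simp [hDf, Nat.cast_smul_eq_nsmul]
  have hsum : (lieSpan R L S).toSubmodule ⊔ levelSum D {0}ᶜ = ⊤ :=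
    hT.sup_levelSum_eq_top hS (fun x hx => subset_lieSpan (.inl hx)) hE hF
  refine (eq_of_le_of_inf_le_of_sup_le (z := levelSum D {0}ᶜ) hS ?_ ?_).symm
  · exact disjoint_eigenspace_zero_levelSum.le_bot.trans bot_le
  · exact hsum ▸ le_top

end Levels

theorem lieSpan_range_freeLieAlgebra_of (R X : Type*) [CommRing R] :
    lieSpan R (FreeLieAlgebra R X) (Set.range (FreeLieAlgebra.of R)) = ⊤ := by
  set S := lieSpan R (FreeLieAlgebra R X) (Set.range (FreeLieAlgebra.of R))
  let φ : FreeLieAlgebra R X →ₗ⁅R⁆ S :=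
    FreeLieAlgebra.lift R fun x => ⟨FreeLieAlgebra.of R x, subset_lieSpan ⟨x, rfl⟩⟩
  have hφ : S.incl.comp φ = LieHom.id := by ext x; simp [φ]
  refine eq_top_iff.2 fun x _ => ?_
  have hx : (φ x : FreeLieAlgebra R X) = x := LieHom.congr_fun hφ x
  exact hx ▸ (φ x).2

section KacMoody

variable {B : Type*} [DecidableEq B] (A : Matrix B B ℤ)

/-- The presentation of a Kac–Moody algebra as a quotient of the free Lie algebra, as a
homomorphism of Lie algebras. -/
def kacMoodyPresentation : FreeLieAlgebra ℚ (Generators B) →ₗ⁅ℚ⁆ Matrix.ToLieAlgebra ℚ A :=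
  { (LieSubmodule.Quotient.mk' (Relations.toIdeal ℚ A) :
      FreeLieAlgebra ℚ (Generators B) →ₗ[ℚ] _ ⧸ Relations.toIdeal ℚ A) with
    map_lie' := fun {x y} => LieSubmodule.Quotient.mk_bracket _ x y }

theorem kacMoodyPresentation_of (x : Generators B) :
    kacMoodyPresentation A (FreeLieAlgebra.of ℚ x) = KMgen A x :=
  rfl

theorem kacMoodyPresentation_surjective : Function.Surjective (kacMoodyPresentation A) :=
  LieSubmodule.Quotient.surjective_mk' (Relations.toIdeal ℚ A)

theorem kacMoodyPresentation_eq_zero {x : FreeLieAlgebra ℚ (Generators B)}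
    (hx : x ∈ Relations.toSet ℚ A) : kacMoodyPresentation A x = 0 :=
  LieSubmodule.Quotient.mk_eq_zero'.2 (LieSubmodule.subset_lieSpan hx)

theorem lieSpan_range_KMgen : lieSpan ℚ (Matrix.ToLieAlgebra ℚ A) (Set.range (KMgen A)) = ⊤ := by
  have range_eq : Set.range (KMgen A) =
      kacMoodyPresentation A '' Set.range (FreeLieAlgebra.of ℚ) :=
    Set.range_comp (kacMoodyPresentation A) (FreeLieAlgebra.of ℚ)
  rw [range_eq, ← map_lieSpan, lieSpan_range_freeLieAlgebra_of, ← LieHom.range_eq_map,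
    LieHom.range_eq_top]
  exact kacMoodyPresentation_surjective A

theorem lie_gH_gE (i j : B) : ⁅gH A i, gE A j⁆ = A i j • gE A j := by
  have relation := kacMoodyPresentation_eq_zero A (x := Relations.HE ℚ A (i, j))
    (by simp [Relations.toSet])
  simpa [Relations.HE, gH, gE, kacMoodyPresentation_of, sub_eq_zero] using relation

theorem lie_gH_gF (i j : B) : ⁅gH A i, gF A j⁆ = -(A i j • gF A j) := by
  have relation := kacMoodyPresentation_eq_zero A (x := Relations.HF ℚ A (i, j))
    (by simp [Relations.toSet])
  simpa [Relations.HF, gH, gF, kacMoodyPresentation_of, add_eq_zero_iff_eq_neg] using relation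

theorem lie_gE_gF (i j : B) : ⁅gE A i, gF A j⁆ = if i = j then gH A i else 0 := by
  have relation := kacMoodyPresentation_eq_zero A (x := Relations.EF ℚ (i, j))
    (by simp [Relations.toSet])
  obtain rfl | hij := eq_or_ne i j
  · simpa [Relations.EF, gH, gE, gF, kacMoodyPresentation_of, sub_eq_zero] using relation
  · simpa [Relations.EF, gE, gF, kacMoodyPresentation_of, hij] using relation

theorem isTriangularSystem_kacMoody :
    IsTriangularSystem ℚ (Set.range (gH A)) (Set.range (gE A)) (Set.range (gF A)) where
  lie_raising_mem := by
    rintro _ ⟨i, rfl⟩ _ ⟨j, rfl⟩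
    rw [lie_gH_gE]
    exact zsmul_mem (subset_lieSpan (Set.mem_range_self j)) _
  lie_lowering_mem := by
    rintro _ ⟨i, rfl⟩ _ ⟨j, rfl⟩
    rw [lie_gH_gF]
    exact neg_mem (zsmul_mem (subset_lieSpan (Set.mem_range_self j)) _)
  lie_mem_cartan := by
    rintro _ ⟨i, rfl⟩ _ ⟨j, rfl⟩
    rw [lie_gE_gF]
    split_ifs
    · exact subset_lieSpan ⟨i, rfl⟩
    · exact zero_mem _
  lieSpan_eq_top := by
    rw [eq_top_iff, ← lieSpan_range_KMgen A]
    refine lieSpan_mono ?_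
    rintro _ ⟨i | i | i, rfl⟩
    · exact .inl (.inl ⟨i, rfl⟩)
    · exact .inl (.inr ⟨i, rfl⟩)
    · exact .inr ⟨i, rfl⟩

end KacMoody

/-- **Level-zero subalgebra.** For a GCM `A`, an index `i₀` and the level derivation `D`
with respect to `i₀`, the eigenspace of `D` with eigenvalue `0` is exactly the Lie
subalgebra of `g(A)` generated by all `h i` together with the `e j, f j` for `j ≠ i₀`. -/
theorem level_zero_subalgebra {k : ℕ} (A : Matrix (Fin k) (Fin k) ℤ) (hA : IsGCM A)
    (i₀ : Fin k)
    (D : LieDerivation ℚ (Matrix.ToLieAlgebra ℚ A) (Matrix.ToLieAlgebra ℚ A))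
    (hDe : ∀ i, D (gE A i) = if i = i₀ then gE A i else 0)
    (hDf : ∀ i, D (gF A i) = if i = i₀ then -gF A i else 0)
    (hDh : ∀ i, D (gH A i) = 0) :
    Module.End.eigenspace D.toLinearMap 0 =
      (LieSubalgebra.lieSpan ℚ (Matrix.ToLieAlgebra ℚ A)
        (Set.range (gH A) ∪ {x | ∃ j, j ≠ i₀ ∧ (x = gE A j ∨ x = gF A j)})).toSubmodule := by
  simpa [Pi.single_apply] using level_zero_subalgebra_general (isTriangularSystem_kacMoody A)
    (D := D) (Pi.single i₀ 1) (by simpa [Pi.single_apply] using hDe)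
    (by simpa [Pi.single_apply, neg_ite] using hDf) (by simpa using hDh)
end
end
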